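/- arXiv:gr-qc/0508085 — 5 statements merged into one kernel-verified Lean document; each statement's English description precedes it below -/
import Mathlib

section
/- For all natural numbers n and k with k ≤ n, the sum over j from 0 to min(k, n−k) of (C(2k, k+j) − C(2k, k+j+1)) · (C(2n−2k, n−k+j) − C(2n−2k, n−k+j+1)) equals catalan(n) = C(2n,n)/(n+1). -/
/-!
Adjoining two qubits acts on a sequence of spin multiplicities by `u_j ↦ u_{j-1} + 2 u_j + u_{j+1}`
(and `u_0 ↦ u_0 + u_1`). This operator is symmetric for the pairing `∑ j, u j * v j` up to a
boundary term, which vanishes on the finitely supported multiplicity sequences. So qubit pairs can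
be moved one at a time from the first block to the second without changing the pairing. Once the
first block is empty, the pairing is the multiplicity of the trivial representation in the tensor
power of all the qubits, which is a Catalan number.
-/

open Finset

/-- The effect on the multiplicities `u j` of the integer-spin representations `V_j` of SU(2) of
tensoring with two further spin-1/2 representations, `V_{1/2} ⊗ V_{1/2} = V_0 ⊕ V_1`. -/
def tensorQubitPair {R : Type*} [Semiring R] (u : ℕ → R) : ℕ → R
  | 0 => u 0 + u 1
  | j + 1 => u j + 2 * u (j + 1) + u (j + 2)

/-- The multiplicity `d_j^{(2m)}` of the spin-`j` representation of SU(2) in the `2m`-fold tensor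
power of the spin-1/2 representation. The subtraction never truncates, by
`choose_succ_le_choose_of_le_two_mul_add_one`. -/
def spinMultiplicity (m j : ℕ) : ℕ :=
  (2 * m).choose (m + j) - (2 * m).choose (m + j + 1)

theorem sum_tensorQubitPair_mul {R : Type*} [CommSemiring R] (u v : ℕ → R) (n : ℕ) :
    ∑ j ∈ range (n + 1), tensorQubitPair u j * v j + u n * v (n + 1) =
      ∑ j ∈ range (n + 1), u j * tensorQubitPair v j + u (n + 1) * v n := by
  induction n with
  | zero =>
    simp only [zero_add, sum_range_one, tensorQubitPair]
    ring
  | succ n ih =>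
    rw [sum_range_succ _ (n + 1), sum_range_succ _ (n + 1)]
    calc
      _ = (∑ j ∈ range (n + 1), tensorQubitPair u j * v j + u n * v (n + 1)) +
            (2 * u (n + 1) + u (n + 2)) * v (n + 1) + u (n + 1) * v (n + 2) := by
        rw [tensorQubitPair]
        ring
      _ = (∑ j ∈ range (n + 1), u j * tensorQubitPair v j + u (n + 1) * v n) +
            (2 * u (n + 1) + u (n + 2)) * v (n + 1) + u (n + 1) * v (n + 2) := by rw [ih]
      _ = _ := by
        rw [tensorQubitPair]
        ring

theorem choose_succ_le_choose_of_le_two_mul_add_one {n r : ℕ} (h : n ≤ 2 * r + 1) :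
    n.choose (r + 1) ≤ n.choose r := by
  refine Nat.le_of_mul_le_mul_right ?_ r.succ_pos
  calc n.choose (r + 1) * (r + 1) = n.choose r * (n - r) := Nat.choose_succ_right_eq n r
    _ ≤ n.choose r * (r + 1) := Nat.mul_le_mul_left _ (by lia)

theorem spinMultiplicity_add_choose (m j : ℕ) :
    spinMultiplicity m j + (2 * m).choose (m + j + 1) = (2 * m).choose (m + j) :=
  Nat.sub_add_cancel (choose_succ_le_choose_of_le_two_mul_add_one (by lia))

theorem spinMultiplicity_eq_zero_of_lt {m j : ℕ} (h : m < j) : spinMultiplicity m j = 0 := by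
  rw [spinMultiplicity, Nat.choose_eq_zero_of_lt (by lia), Nat.zero_sub]

theorem spinMultiplicity_zero_right (m : ℕ) : spinMultiplicity m 0 = catalan m := by
  have hsub : spinMultiplicity m 0 + (2 * m).choose (m + 1) = (2 * m).choose m :=
    spinMultiplicity_add_choose m 0
  have hratio : (2 * m).choose (m + 1) * (m + 1) = (2 * m).choose m * m := by
    simpa only [two_mul, Nat.add_sub_cancel] using Nat.choose_succ_right_eq (2 * m) m
  refine Nat.eq_of_mul_eq_mul_left m.succ_pos ?_
  rw [Nat.succ_eq_add_one, succ_mul_catalan_eq_centralBinom, Nat.centralBinom_eq_two_mul_choose]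
  linarith [congrArg (· * (m + 1)) hsub]

theorem spinMultiplicity_succ_zero (m : ℕ) :
    spinMultiplicity (m + 1) 0 = spinMultiplicity m 0 + spinMultiplicity m 1 := by
  have hsucc := spinMultiplicity_add_choose (m + 1) 0
  have hzero := spinMultiplicity_add_choose m 0
  have hone := spinMultiplicity_add_choose m 1
  -- `Nat.choose_symm_half` reflects the one coefficient lying below the middle.
  simp only [Nat.mul_succ, add_zero, Nat.choose_succ_succ' (2 * m + 1),
    ← Nat.choose_symm_half m, Nat.choose_succ_succ' (2 * m)] at hsucc hzero
  lia

theorem spinMultiplicity_succ_succ (m j : ℕ) :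
    spinMultiplicity (m + 1) (j + 1) =
      spinMultiplicity m j + 2 * spinMultiplicity m (j + 1) + spinMultiplicity m (j + 2) := by
  have hsucc := spinMultiplicity_add_choose (m + 1) (j + 1)
  have hleft := spinMultiplicity_add_choose m j
  have hmid := spinMultiplicity_add_choose m (j + 1)
  have hright := spinMultiplicity_add_choose m (j + 2)
  have hindex : m + 1 + (j + 1) = m + j + 1 + 1 := by ring
  simp only [hindex, Nat.mul_succ, ← add_assoc, Nat.choose_succ_succ'] at hsucc hmid hright
  lia

theorem spinMultiplicity_succ (m : ℕ) :
    spinMultiplicity (m + 1) = tensorQubitPair (spinMultiplicity m) := by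
  funext j
  cases j with
  | zero => exact spinMultiplicity_succ_zero m
  | succ j => exact spinMultiplicity_succ_succ m j

theorem sum_spinMultiplicity_succ_mul {a n : ℕ} (b : ℕ) (h : a < n) :
    ∑ j ∈ range (n + 1), spinMultiplicity (a + 1) j * spinMultiplicity b j =
      ∑ j ∈ range (n + 1), spinMultiplicity a j * spinMultiplicity (b + 1) j := by
  simpa only [← spinMultiplicity_succ, spinMultiplicity_eq_zero_of_lt h,
    spinMultiplicity_eq_zero_of_lt (h.trans n.lt_succ_self), zero_mul, add_zero]
    using sum_tensorQubitPair_mul (spinMultiplicity a) (spinMultiplicity b) n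

theorem sum_spinMultiplicity_mul {a n : ℕ} (b : ℕ) (h : a < n) :
    ∑ j ∈ range n, spinMultiplicity a j * spinMultiplicity b j = catalan (a + b) := by
  induction a generalizing b n with
  | zero =>
    rw [sum_eq_single_of_mem 0 (mem_range.mpr h) fun j _ hj ↦ by
      rw [spinMultiplicity_eq_zero_of_lt (Nat.pos_of_ne_zero hj), zero_mul]]
    rw [spinMultiplicity_zero_right, spinMultiplicity_zero_right, catalan_zero, one_mul, zero_add]
  | succ a ih =>
    obtain ⟨n, rfl⟩ : ∃ k, n = k + 1 := Nat.exists_eq_succ_of_ne_zero (by lia)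
    rw [sum_spinMultiplicity_succ_mul b (by lia), ih (b + 1) (by lia)]
    congr 1
    ring

theorem sum_spinMultiplicity_mul_range_min (a b : ℕ) :
    ∑ j ∈ range (min a b + 1), spinMultiplicity a j * spinMultiplicity b j = catalan (a + b) := by
  rcases le_total a b with hab | hba
  · rw [min_eq_left hab, sum_spinMultiplicity_mul b a.lt_succ_self]
  · simp_rw [min_eq_right hba, mul_comm (spinMultiplicity a _), add_comm a b]
    exact sum_spinMultiplicity_mul a b.lt_succ_self

/-- Σ_{j=0}^{min(k, n−k)} d_j^{(2k)} · d_j^{(2n−2k)} = catalan n, where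
d_j^{(2m)} = C(2m, m+j) − C(2m, m+j+1). -/
theorem stmt_7 (n k : ℕ) (h : k ≤ n) :
    ∑ j ∈ Finset.range (min k (n - k) + 1),
        (Nat.choose (2 * k) (k + j) - Nat.choose (2 * k) (k + j + 1)) *
          (Nat.choose (2 * n - 2 * k) (n - k + j) - Nat.choose (2 * n - 2 * k) (n - k + j + 1)) =
      catalan n := by
  rw [← Nat.mul_sub]
  exact (sum_spinMultiplicity_mul_range_min k (n - k)).trans
    (congrArg catalan (Nat.add_sub_of_le h))
end

section
/- Let T_n denote the number of sequences (a₁, …, a_n) with each a_i ∈ {−1, 0, 1} and a₁ + ⋯ + a_n = 0. Then T_n · √n / 3^n converges to √3/(2√π) as n → ∞. -/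
open Filter

/-!
Expanding `(1 + 2 cos θ)ⁿ = (e^{-iθ} + 1 + e^{iθ})ⁿ` and integrating over a period leaves exactly
the constant terms, so `2π Tₙ = ∫ (1 + 2 cos θ)ⁿ dθ`. The normalised integrand
`φ = (1 + 2 cos) / 3` has the expansion `φ θ = 1 - θ² / 3 + o(θ²)` at its maximum and is dominated
by the Gaussian `exp (-θ² / π²)` on the whole period. Substituting `θ = x / √n`, dominated
convergence turns `√n ∫ φⁿ` into the Gaussian integral `∫ exp (-x² / 3) dx = √(3π)`.
-/

open Asymptotics MeasureTheory Set
open scoped Real Topology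

section LaplaceMethod

variable {φ : ℝ → ℝ} {b c : ℝ}

lemma tendsto_div_sqrt_natCast (x : ℝ) : Tendsto (fun n : ℕ ↦ x / √n) atTop (𝓝 0) :=
  (Real.tendsto_sqrt_atTop.comp tendsto_natCast_atTop_atTop).const_div_atTop x

lemma natCast_mul_div_sqrt_sq {n : ℕ} (hn : n ≠ 0) (x : ℝ) : n * (x / √n) ^ 2 = x ^ 2 := by
  rw [div_pow, Real.sq_sqrt n.cast_nonneg, mul_div_cancel₀ _ (Nat.cast_ne_zero.mpr hn)]

lemma tendsto_comp_div_sqrt_pow (hφ : (fun θ ↦ φ θ - (1 - c * θ ^ 2)) =o[𝓝 0] fun θ ↦ θ ^ 2)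
    (x : ℝ) : Tendsto (fun n : ℕ ↦ φ (x / √n) ^ n) atTop (𝓝 (Real.exp (-c * x ^ 2))) := by
  have scaled_sq : (fun n : ℕ ↦ n * (x / √n) ^ 2) =ᶠ[atTop] fun _ ↦ x ^ 2 := by
    filter_upwards [eventually_ne_atTop 0] with n hn using natCast_mul_div_sqrt_sq hn x
  have remainder : Tendsto (fun n : ℕ ↦ n * (φ (x / √n) - (1 - c * (x / √n) ^ 2))) atTop (𝓝 0) :=
    (isLittleO_one_iff ℝ).mp <|
      ((isBigO_refl _ _).mul_isLittleO (hφ.comp_tendsto (tendsto_div_sqrt_natCast x))).trans_isBigO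
        (scaled_sq.trans_isBigO (isBigO_const_const _ one_ne_zero _))
  have exponent : Tendsto (fun n : ℕ ↦ n * (φ (x / √n) - 1)) atTop (𝓝 (-c * x ^ 2)) := by
    have := remainder.add (tendsto_const_nhds.congr' scaled_sq.symm |>.const_mul (-c))
    rw [zero_add] at this
    exact this.congr fun n ↦ by ring
  simpa only [add_sub_cancel] using Real.tendsto_one_add_pow_exp_of_tendsto exponent

lemma norm_comp_div_sqrt_pow_le (hbound : ∀ θ, |φ θ| ≤ Real.exp (-b * θ ^ 2)) {n : ℕ} (hn : n ≠ 0)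
    (x : ℝ) : ‖φ (x / √n) ^ n‖ ≤ Real.exp (-b * x ^ 2) :=
  calc ‖φ (x / √n) ^ n‖ = |φ (x / √n)| ^ n := norm_pow _ _
    _ ≤ Real.exp (-b * (x / √n) ^ 2) ^ n := by gcongr; exact hbound _
    _ = Real.exp (-b * x ^ 2) := by
      rw [← Real.exp_nat_mul, mul_left_comm, natCast_mul_div_sqrt_sq hn]

theorem tendsto_sqrt_mul_integral_pow (hmeas : AEStronglyMeasurable φ) (hb : 0 < b)
    (hbound : ∀ θ, |φ θ| ≤ Real.exp (-b * θ ^ 2))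
    (hφ : (fun θ ↦ φ θ - (1 - c * θ ^ 2)) =o[𝓝 0] fun θ ↦ θ ^ 2) :
    Tendsto (fun n : ℕ ↦ √n * ∫ θ, φ θ ^ n) atTop (𝓝 √(π / c)) := by
  have rescale (n : ℕ) : ∫ x, φ (x / √n) ^ n = √n * ∫ θ, φ θ ^ n := by
    rw [Measure.integral_comp_div (fun θ ↦ φ θ ^ n), abs_of_nonneg (Real.sqrt_nonneg _),
      smul_eq_mul]
  simp_rw [← rescale, ← integral_gaussian]
  refine tendsto_integral_filter_of_dominated_convergence (fun x ↦ Real.exp (-b * x ^ 2)) ?_ ?_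
    (integrable_exp_neg_mul_sq hb) (ae_of_all _ (tendsto_comp_div_sqrt_pow hφ))
  · filter_upwards [eventually_ne_atTop 0] with n hn
    have hsqrt : (√n)⁻¹ ≠ 0 := by positivity
    simp_rw [div_eq_inv_mul]
    exact (hmeas.comp_quasiMeasurePreserving (Measure.quasiMeasurePreserving_smul _ hsqrt)).pow n
  · filter_upwards [eventually_ne_atTop 0] with n hn
    exact ae_of_all _ (norm_comp_div_sqrt_pow_le hbound hn)

theorem tendsto_sqrt_mul_setIntegral_pow {s : Set ℝ} (hs : MeasurableSet s) (hs0 : s ∈ 𝓝 0)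
    (hmeas : AEStronglyMeasurable φ (volume.restrict s)) (hb : 0 < b)
    (hbound : ∀ θ ∈ s, |φ θ| ≤ Real.exp (-b * θ ^ 2))
    (hφ : (fun θ ↦ φ θ - (1 - c * θ ^ 2)) =o[𝓝 0] fun θ ↦ θ ^ 2) :
    Tendsto (fun n : ℕ ↦ √n * ∫ θ in s, φ θ ^ n) atTop (𝓝 √(π / c)) := by
  have indicator_bound (θ : ℝ) : |s.indicator φ θ| ≤ Real.exp (-b * θ ^ 2) := by
    rw [← Real.norm_eq_abs, norm_indicator_eq_indicator_norm]
    exact indicator_apply_le' (hbound θ) fun _ ↦ Real.exp_nonneg _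
  have indicator_expansion :
      (fun θ ↦ s.indicator φ θ - (1 - c * θ ^ 2)) =o[𝓝 0] fun θ ↦ θ ^ 2 := by
    refine hφ.congr' ?_ .rfl
    filter_upwards [hs0] with θ hθ
    rw [indicator_of_mem hθ]
  refine (tendsto_sqrt_mul_integral_pow ((aestronglyMeasurable_indicator_iff hs).mpr hmeas) hb
    indicator_bound indicator_expansion).congr' ?_
  filter_upwards [eventually_ne_atTop 0] with n hn
  have indicator_pow : (fun θ ↦ s.indicator φ θ ^ n) = s.indicator (fun θ ↦ φ θ ^ n) :=
    (indicator_comp_of_zero (g := (· ^ n)) (zero_pow hn)).symm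
  rw [indicator_pow, integral_indicator hs]

end LaplaceMethod

section LatticeWalks

lemma integral_exp_intCast_mul_I (m : ℤ) :
    ∫ θ in -π..π, Complex.exp (m * Complex.I * θ) = if m = 0 then 2 * (π : ℂ) else 0 := by
  split_ifs with hm
  · simp [hm, two_mul]
  · have periodic : Complex.exp (m * Complex.I * π) = Complex.exp (m * Complex.I * (-π : ℝ)) :=
      Complex.exp_eq_exp_iff_exists_int.mpr ⟨m, by push_cast; ring⟩
    rw [integral_exp_mul_complex (by simp [hm]), periodic, sub_self, zero_div]

variable {ι : Type*} [Fintype ι]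

lemma prod_sum_exp_intCast_mul [DecidableEq ι] (S : ι → Finset ℤ) (z : ℂ) :
    ∏ i, ∑ j ∈ S i, Complex.exp (j * z) =
      ∑ a ∈ Fintype.piFinset S, Complex.exp ((∑ i, a i : ℤ) * z) := by
  simp_rw [Finset.prod_univ_sum, ← Complex.exp_sum, Int.cast_sum, Finset.sum_mul]

lemma ncard_setOf_mem_and_sum_eq [DecidableEq ι] {M : Type*} [AddCommMonoid M] [DecidableEq M]
    (S : ι → Finset M) (k : M) :
    {a : ι → M | (∀ i, a i ∈ S i) ∧ ∑ i, a i = k}.ncard =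
      (Fintype.piFinset S |>.filter fun a ↦ ∑ i, a i = k).card := by
  rw [← ncard_coe_finset]
  congr 1
  ext a
  simp

theorem integral_exp_neg_mul_prod_sum_exp (S : ι → Finset ℤ) (k : ℤ) :
    ∫ θ in -π..π, Complex.exp (-k * (Complex.I * θ)) *
        ∏ i, ∑ j ∈ S i, Complex.exp (j * (Complex.I * θ)) =
      2 * π * {a : ι → ℤ | (∀ i, a i ∈ S i) ∧ ∑ i, a i = k}.ncard := by
  classical
  have expand (θ : ℝ) : Complex.exp (-k * (Complex.I * θ)) *
      ∏ i, ∑ j ∈ S i, Complex.exp (j * (Complex.I * θ)) =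
        ∑ a ∈ Fintype.piFinset S, Complex.exp ((∑ i, a i - k : ℤ) * Complex.I * θ) := by
    rw [prod_sum_exp_intCast_mul, Finset.mul_sum]
    refine Finset.sum_congr rfl fun a _ ↦ ?_
    rw [← Complex.exp_add]
    push_cast
    ring_nf
  simp_rw [expand]
  rw [intervalIntegral.integral_finsetSum fun a _ ↦
    (by fun_prop : Continuous _).intervalIntegrable _ _]
  simp_rw [integral_exp_intCast_mul_I, sub_eq_zero]
  rw [← Finset.sum_filter, Finset.sum_const, nsmul_eq_mul, mul_comm, ncard_setOf_mem_and_sum_eq]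

end LatticeWalks

lemma sum_exp_unit_steps (θ : ℝ) :
    ∑ j ∈ ({-1, 0, 1} : Finset ℤ), Complex.exp (j * (Complex.I * θ)) =
      (1 + 2 * Real.cos θ : ℝ) := by
  rw [Finset.sum_insert (by decide), Finset.sum_pair (by decide)]
  push_cast
  rw [Complex.two_cos, mul_comm Complex.I]
  simp only [neg_mul, one_mul, zero_mul, Complex.exp_zero]
  ring

lemma integral_one_add_two_mul_cos_pow (n : ℕ) :
    ∫ θ in -π..π, (1 + 2 * Real.cos θ) ^ n =
      2 * π * {a : Fin n → ℤ |
        (∀ i, a i = -1 ∨ a i = 0 ∨ a i = 1) ∧ ∑ i, a i = 0}.ncard := by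
  have count := integral_exp_neg_mul_prod_sum_exp (fun _ : Fin n ↦ ({-1, 0, 1} : Finset ℤ)) 0
  simp only [sum_exp_unit_steps, Finset.prod_const, Finset.card_univ, Fintype.card_fin,
    Int.cast_zero, neg_zero, zero_mul, Complex.exp_zero, one_mul, Finset.mem_insert,
    Finset.mem_singleton, ← Complex.ofReal_pow, intervalIntegral.integral_ofReal] at count
  exact_mod_cast count

lemma abs_one_add_two_mul_cos_div_three_le {θ : ℝ} (hθ : |θ| ≤ π) :
    |(1 + 2 * Real.cos θ) / 3| ≤ Real.exp (-(1 / π ^ 2) * θ ^ 2) := by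
  have ratio_nonneg : 0 ≤ 1 / π ^ 2 * θ ^ 2 := by positivity
  have ratio_le_one : 1 / π ^ 2 * θ ^ 2 ≤ 1 := by
    rw [one_div_mul_eq_div, div_le_one (by positivity)]
    exact sq_le_sq.mpr (hθ.trans (le_abs_self π))
  have cos_le : Real.cos θ ≤ 1 - 2 * (1 / π ^ 2 * θ ^ 2) :=
    (Real.cos_le_one_sub_mul_cos_sq hθ).trans_eq (by ring)
  rw [neg_mul]
  refine abs_le'.mpr ⟨?_, ?_⟩
  · calc (1 + 2 * Real.cos θ) / 3 ≤ -(1 / π ^ 2 * θ ^ 2) + 1 := by linarith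
      _ ≤ Real.exp (-(1 / π ^ 2 * θ ^ 2)) := Real.add_one_le_exp _
  · calc -((1 + 2 * Real.cos θ) / 3) ≤ 3⁻¹ := by linarith [Real.neg_one_le_cos θ]
      _ ≤ Real.exp (-1) := by
        rw [Real.exp_neg]
        exact inv_anti₀ (Real.exp_pos 1) Real.exp_one_lt_three.le
      _ ≤ Real.exp (-(1 / π ^ 2 * θ ^ 2)) := Real.exp_le_exp.mpr (neg_le_neg ratio_le_one)

lemma cos_sub_one_sub_sq_div_two_isLittleO :
    (fun θ ↦ Real.cos θ - (1 - θ ^ 2 / 2)) =o[𝓝 0] fun θ ↦ θ ^ 2 := by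
  have quartic : (fun θ ↦ Real.cos θ - (1 - θ ^ 2 / 2)) =O[𝓝 0] fun θ ↦ θ ^ 4 := by
    refine .of_bound (5 / 96) ?_
    filter_upwards [Metric.closedBall_mem_nhds (0 : ℝ) one_pos] with θ hθ
    rw [norm_pow, mul_comm]
    exact Real.cos_bound (mem_closedBall_zero_iff.mp hθ)
  exact quartic.trans_isLittleO (isLittleO_pow_pow (by norm_num))

lemma one_add_two_mul_cos_div_three_sub_isLittleO :
    (fun θ ↦ (1 + 2 * Real.cos θ) / 3 - (1 - 1 / 3 * θ ^ 2)) =o[𝓝 0] fun θ ↦ θ ^ 2 :=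
  (cos_sub_one_sub_sq_div_two_isLittleO.const_mul_left (2 / 3)).congr_left fun θ ↦ by ring

lemma tendsto_sqrt_mul_integral_one_add_two_mul_cos_div_three_pow :
    Tendsto (fun n : ℕ ↦ √n * ∫ θ in -π..π, ((1 + 2 * Real.cos θ) / 3) ^ n) atTop
      (𝓝 √(3 * π)) := by
  rw [show 3 * π = π / (1 / 3) by ring]
  simp_rw [intervalIntegral.integral_of_le (neg_le_self Real.pi_nonneg)]
  exact tendsto_sqrt_mul_setIntegral_pow measurableSet_Ioc
    (Ioc_mem_nhds (neg_neg_of_pos Real.pi_pos) Real.pi_pos)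
    (by fun_prop : Continuous _).aestronglyMeasurable (by positivity)
    (fun θ hθ ↦ abs_one_add_two_mul_cos_div_three_le (abs_le.mpr ⟨hθ.1.le, hθ.2⟩))
    one_add_two_mul_cos_div_three_sub_isLittleO

/-- With T n the number of sequences in {−1,0,1}^n summing to 0,
T_n · √n / 3^n → √3/(2√π) as n → ∞. -/
theorem stmt_13 (T : ℕ → ℕ)
    (hT : ∀ n, T n = Set.ncard {a : Fin n → ℤ |
        (∀ i, a i = -1 ∨ a i = 0 ∨ a i = 1) ∧ (∑ i, a i) = 0}) :
    Tendsto (fun n : ℕ => (T n : ℝ) * Real.sqrt n / 3 ^ n)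
      atTop (nhds (Real.sqrt 3 / (2 * Real.sqrt Real.pi))) := by
  have limit_eq : √(3 * π) / (2 * π) = √3 / (2 * √π) := by
    rw [Real.sqrt_mul zero_le_three]
    field_simp
    rw [Real.sq_sqrt Real.pi_nonneg]
  have integral_eq (n : ℕ) :
      ∫ θ in -π..π, ((1 + 2 * Real.cos θ) / 3) ^ n = 2 * π * T n / 3 ^ n := by
    simp_rw [div_pow, intervalIntegral.integral_div, integral_one_add_two_mul_cos_pow, hT]
  rw [← limit_eq]
  refine (tendsto_sqrt_mul_integral_one_add_two_mul_cos_div_three_pow.div_const (2 * π)).congr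
    fun n ↦ ?_
  rw [integral_eq]
  field_simp
end

section
/- For j ∈ {0, 1}, let T_n(j) denote the number of sequences (a₁, …, a_n) with each a_i ∈ {−1, 0, 1} and a₁ + ⋯ + a_n = j. Then (T_n(0) − T_n(1)) · n^{3/2} / 3^n converges to 3√3/(8√π) as n → ∞. -/
open Filter

/-!
Orthogonality of the characters `x ↦ exp (i k x)` on `[-π, π]` turns `T n 0 - T n 1` into
`(2π)⁻¹ ∫ (1 - cos x) (1 + 2 cos x) ^ n`. After division by `3 ^ n` the power concentrates at
`x = 0`, where `(1 + 2 cos x) / 3 ≈ 1 - x² / 3` and `1 - cos x ≈ x² / 2`. Laplace's method, i.e.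
dominated convergence after the substitution `x = t / √n`, therefore leaves the Gaussian integral
`∫ t² / 2 * exp (-t² / 3)`. The extra factor `x²` is what turns the exponent `-1/2` of the number of
returns to the origin into `-3/2`.
-/

open scoped Real Topology

section WalkCount

open Complex MeasureTheory

/-- The number of `n`-step walks on `ℤ` from `0` to `j` with steps in `S`; a walk is encoded by its
sequence of steps. -/
def walkCount (S : Finset ℤ) (n : ℕ) (j : ℤ) : ℕ :=
  {a ∈ Fintype.piFinset fun _ : Fin n => S | ∑ i, a i = j}.card

theorem ncard_setOf_forall_mem_and_sum_eq (S : Finset ℤ) (n : ℕ) (j : ℤ) :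
    {a : Fin n → ℤ | (∀ i, a i ∈ S) ∧ ∑ i, a i = j}.ncard = walkCount S n j := by
  rw [walkCount, ← Set.ncard_coe_finset]
  congr 1
  ext a
  simp

theorem integral_exp_int_mul_I (k : ℤ) :
    ∫ x in -π..π, exp (k * x * I) = if k = 0 then (2 * π : ℂ) else 0 := by
  split_ifs with hk
  · simp [hk, two_mul]
  · have hkI : (k : ℂ) * I ≠ 0 := by simp [hk]
    have hperiod : exp (k * I * π) = exp (k * I * (-π : ℝ)) :=
      exp_eq_exp_iff_exists_int.2 ⟨k, by push_cast; ring⟩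
    simp_rw [mul_right_comm (k : ℂ) _ I]
    rw [integral_exp_mul_complex hkI, hperiod, sub_self, zero_div]

theorem sum_exp_pow_eq_sum_piFinset (S : Finset ℤ) (n : ℕ) (z : ℂ) :
    (∑ k ∈ S, exp (k * z)) ^ n =
      ∑ a ∈ Fintype.piFinset fun _ : Fin n => S, exp ((∑ i, a i : ℤ) * z) := by
  rw [Finset.sum_pow']
  refine Finset.sum_congr rfl fun a _ => ?_
  rw [← exp_sum, ← Finset.sum_mul, Int.cast_sum]

theorem two_pi_mul_walkCount (S : Finset ℤ) (n : ℕ) (j : ℤ) :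
    2 * π * walkCount S n j =
      ∫ x in -π..π, exp (-j * x * I) * (∑ k ∈ S, exp (k * x * I)) ^ n := by
  have hexpand (x : ℝ) : exp (-j * x * I) * (∑ k ∈ S, exp (k * x * I)) ^ n =
      ∑ a ∈ Fintype.piFinset fun _ : Fin n => S, exp ((∑ i, a i - j : ℤ) * x * I) := by
    simp_rw [mul_assoc _ (x : ℂ) I]
    rw [sum_exp_pow_eq_sum_piFinset, Finset.mul_sum]
    refine Finset.sum_congr rfl fun a _ => ?_
    rw [← exp_add]
    push_cast
    ring_nf
  simp_rw [hexpand]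
  rw [intervalIntegral.integral_finsetSum fun a _ =>
    (by fun_prop : Continuous _).intervalIntegrable _ _]
  simp_rw [integral_exp_int_mul_I, sub_eq_zero]
  rw [← Finset.sum_filter, Finset.sum_const, nsmul_eq_mul, walkCount, mul_comm]

theorem sum_exp_neg_one_zero_one (x : ℝ) :
    ∑ k ∈ ({-1, 0, 1} : Finset ℤ), exp (k * x * I) = (1 + 2 * Real.cos x : ℝ) := by
  rw [Finset.sum_insert (by decide), Finset.sum_insert (by decide), Finset.sum_singleton]
  push_cast
  rw [two_cos]
  simp only [neg_mul, one_mul, zero_mul, exp_zero]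
  ring

theorem two_pi_mul_walkCount_neg_one_zero_one (n : ℕ) (j : ℤ) :
    2 * π * walkCount {-1, 0, 1} n j =
      ∫ x in -π..π, Real.cos (j * x) * (1 + 2 * Real.cos x) ^ n := by
  have hre (x : ℝ) : Real.cos (j * x) * (1 + 2 * Real.cos x) ^ n =
      (exp (-j * x * I) * ((1 + 2 * Real.cos x : ℝ) : ℂ) ^ n).re := by
    rw [← ofReal_pow, re_mul_ofReal]
    simpa using congrArg (· * (1 + 2 * Real.cos x) ^ n) (exp_ofReal_mul_I_re (-j * x)).symm
  have hcount := two_pi_mul_walkCount {-1, 0, 1} n j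
  simp_rw [sum_exp_neg_one_zero_one] at hcount
  simp_rw [hre]
  rw [← RCLike.re_eq_complex_re, intervalIntegral.intervalIntegral_re, ← hcount]
  · norm_cast
  · exact (by fun_prop : Continuous _).intervalIntegrable _ _

theorem walkCount_zero_sub_walkCount_one (n : ℕ) :
    (walkCount {-1, 0, 1} n 0 - walkCount {-1, 0, 1} n 1 : ℝ) =
      (2 * π)⁻¹ * ∫ x in -π..π, (1 - Real.cos x) * (1 + 2 * Real.cos x) ^ n := by
  rw [eq_inv_mul_iff_mul_eq₀ Real.two_pi_pos.ne', mul_sub, two_pi_mul_walkCount_neg_one_zero_one,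
    two_pi_mul_walkCount_neg_one_zero_one, ← intervalIntegral.integral_sub]
  · simp [sub_mul]
  all_goals exact (by fun_prop : Continuous _).intervalIntegrable _ _

end WalkCount

section LaplaceMethod

open MeasureTheory Set

variable {f g : ℝ → ℝ} {s : Set ℝ} {b c C d : ℝ} {k : ℕ}

theorem tendsto_div_sqrt_natCast_nhdsNE {t : ℝ} (ht : t ≠ 0) :
    Tendsto (fun n : ℕ => t / √n) atTop (𝓝[≠] 0) := by
  refine tendsto_nhdsWithin_iff.2 ⟨?_, ?_⟩
  · exact tendsto_const_nhds.div_atTop (Real.tendsto_sqrt_atTop.comp tendsto_natCast_atTop_atTop)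
  · filter_upwards [eventually_gt_atTop 0] with n hn
    exact div_ne_zero ht (Real.sqrt_pos.2 (Nat.cast_pos.2 hn)).ne'

theorem tendsto_sqrt_pow_mul_comp_div_sqrt
    (hg : Tendsto (fun x => g x / x ^ k) (𝓝[≠] 0) (𝓝 d)) {t : ℝ} (ht : t ≠ 0) :
    Tendsto (fun n : ℕ => √n ^ k * g (t / √n)) atTop (𝓝 (d * t ^ k)) := by
  refine ((hg.comp (tendsto_div_sqrt_natCast_nhdsNE ht)).mul_const (t ^ k)).congr' ?_
  filter_upwards [eventually_gt_atTop 0] with n hn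
  have hsqrt : 0 < √(n : ℝ) := Real.sqrt_pos.2 (Nat.cast_pos.2 hn)
  rw [Function.comp_apply, div_pow]
  field_simp [hsqrt.ne']

theorem tendsto_comp_div_sqrt_pow_s14 (hf : Tendsto (fun x => (f x - 1) / x ^ 2) (𝓝[≠] 0) (𝓝 (-b)))
    {t : ℝ} (ht : t ≠ 0) :
    Tendsto (fun n : ℕ => f (t / √n) ^ n) atTop (𝓝 (Real.exp (-b * t ^ 2))) := by
  have hscaled := tendsto_sqrt_pow_mul_comp_div_sqrt hf ht
  simp only [Real.sq_sqrt (Nat.cast_nonneg _)] at hscaled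
  simpa only [add_sub_cancel] using Real.tendsto_one_add_pow_exp_of_tendsto hscaled

theorem abs_pow_comp_div_sqrt_le (hf : ∀ x ∈ s, |f x| ≤ Real.exp (-c * x ^ 2)) {n : ℕ} (hn : 0 < n)
    {t : ℝ} (ht : t / √n ∈ s) : |f (t / √n) ^ n| ≤ Real.exp (-c * t ^ 2) := by
  have hn' : (n : ℝ) ≠ 0 := Nat.cast_ne_zero.2 hn.ne'
  calc |f (t / √n) ^ n| = |f (t / √n)| ^ n := abs_pow _ _
    _ ≤ Real.exp (-c * (t / √n) ^ 2) ^ n := by gcongr; exact hf _ ht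
    _ = Real.exp (-c * t ^ 2) := by
      rw [← Real.exp_nat_mul, div_pow, Real.sq_sqrt n.cast_nonneg]
      field_simp

theorem abs_sqrt_pow_mul_comp_div_sqrt_le (hg : ∀ x ∈ s, |g x| ≤ C * |x| ^ k) {n : ℕ} (hn : 0 < n)
    {t : ℝ} (ht : t / √n ∈ s) : |√n ^ k * g (t / √n)| ≤ C * |t| ^ k := by
  have hsqrt : 0 < √(n : ℝ) := Real.sqrt_pos.2 (Nat.cast_pos.2 hn)
  calc |√n ^ k * g (t / √n)| = √n ^ k * |g (t / √n)| := by rw [abs_mul, abs_of_pos (by positivity)]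
    _ ≤ √n ^ k * (C * |t / √n| ^ k) := by gcongr; exact hg _ ht
    _ = C * |t| ^ k := by
      rw [abs_div, abs_of_pos hsqrt, div_pow]
      field_simp

theorem integrable_abs_pow_mul_exp_neg_mul_sq (hc : 0 < c) (k : ℕ) :
    Integrable fun t : ℝ => |t| ^ k * Real.exp (-c * t ^ 2) := by
  have h := integrable_rpow_mul_exp_neg_mul_sq hc (s := k) (by linarith [k.cast_nonneg (α := ℝ)])
  simpa [abs_mul, abs_pow] using h.abs

theorem sqrt_pow_succ_mul_setIntegral (F : ℝ → ℝ) (hs : MeasurableSet s) (n : ℕ) :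
    √n ^ (k + 1) * ∫ x in s, F x = ∫ t, √n ^ k * s.indicator F (t / √n) := by
  rw [integral_const_mul, Measure.integral_comp_div, integral_indicator hs, smul_eq_mul,
    abs_of_nonneg (Real.sqrt_nonneg _), pow_succ, mul_assoc]

/-- Laplace's method for the powers of a function with a nondegenerate maximum at `0`. -/
theorem tendsto_sqrt_pow_mul_setIntegral_mul_pow (hs : MeasurableSet s) (hs0 : s ∈ 𝓝 0)
    (hf_meas : Measurable f) (hg_meas : Measurable g) (hc : 0 < c)
    (hf_le : ∀ x ∈ s, |f x| ≤ Real.exp (-c * x ^ 2)) (hg_le : ∀ x ∈ s, |g x| ≤ C * |x| ^ k)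
    (hf : Tendsto (fun x => (f x - 1) / x ^ 2) (𝓝[≠] 0) (𝓝 (-b)))
    (hg : Tendsto (fun x => g x / x ^ k) (𝓝[≠] 0) (𝓝 d)) :
    Tendsto (fun n : ℕ => √n ^ (k + 1) * ∫ x in s, g x * f x ^ n) atTop
      (𝓝 (∫ t, d * t ^ k * Real.exp (-b * t ^ 2))) := by
  simp_rw [sqrt_pow_succ_mul_setIntegral _ hs]
  refine tendsto_integral_filter_of_dominated_convergence
    (fun t => |C| * (|t| ^ k * Real.exp (-c * t ^ 2))) ?_ ?_
    ((integrable_abs_pow_mul_exp_neg_mul_sq hc k).const_mul _) ?_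
  · refine .of_forall fun n => Measurable.aestronglyMeasurable ?_
    exact (((by fun_prop : Measurable fun x => g x * f x ^ n).indicator hs).comp
      (measurable_id.div_const _)).const_mul _
  · filter_upwards [eventually_gt_atTop 0] with n hn
    refine .of_forall fun t => ?_
    by_cases ht : t / √n ∈ s
    · rw [indicator_of_mem ht, ← mul_assoc, ← mul_assoc, norm_mul]
      have hg_le' : ∀ x ∈ s, |g x| ≤ |C| * |x| ^ k := fun x hx =>
        (hg_le x hx).trans (by gcongr; exact le_abs_self C)
      exact mul_le_mul (abs_sqrt_pow_mul_comp_div_sqrt_le hg_le' hn ht)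
        (abs_pow_comp_div_sqrt_le hf_le hn ht) (abs_nonneg _) (by positivity)
    · rw [indicator_of_notMem ht, mul_zero, norm_zero]
      positivity
  · filter_upwards [Measure.ae_ne volume 0] with t ht
    refine ((tendsto_sqrt_pow_mul_comp_div_sqrt hg ht).mul
      (tendsto_comp_div_sqrt_pow_s14 hf ht)).congr' ?_
    have hmem := (tendsto_div_sqrt_natCast_nhdsNE ht).eventually (nhdsWithin_le_nhds hs0)
    filter_upwards [hmem] with n hn
    rw [indicator_of_mem hn, mul_assoc]

theorem integral_sq_mul_exp_neg_mul_sq (hb : 0 < b) :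
    ∫ t, t ^ 2 * Real.exp (-b * t ^ 2) = √(π / b) / (2 * b) := by
  have hIoi : ∫ t in Ioi 0, t ^ 2 * Real.exp (-b * t ^ 2) = √(π / b) / (4 * b) := by
    have hGamma : Real.Gamma ((2 + 1) / 2) = √π / 2 := by
      rw [show ((2 : ℝ) + 1) / 2 = 1 / 2 + 1 by norm_num, Real.Gamma_add_one (by norm_num),
        Real.Gamma_one_half_eq]
      ring
    have hpow : b ^ (-((2 : ℝ) + 1) / 2) = (b * √b)⁻¹ := by
      rw [show -((2 : ℝ) + 1) / 2 = -(1 + 1 / 2) by norm_num, Real.rpow_neg hb.le,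
        Real.rpow_add hb, Real.rpow_one, Real.sqrt_eq_rpow]
    have h := integral_rpow_mul_exp_neg_mul_rpow (p := 2) (q := 2) two_pos (by norm_num) hb
    simp only [Real.rpow_two] at h
    rw [h, hGamma, hpow, Real.sqrt_div Real.pi_pos.le]
    field_simp
    norm_num
  have heven := integral_comp_abs (f := fun t => t ^ 2 * Real.exp (-b * t ^ 2))
  simp only [sq_abs] at heven
  rw [heven, hIoi]
  field_simp
  norm_num

end LaplaceMethod

section CosineEstimates

open Real

theorem tendsto_one_sub_cos_div_sq :
    Tendsto (fun x => (1 - cos x) / x ^ 2) (𝓝[≠] 0) (𝓝 (1 / 2)) := by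
  have hsinc : Tendsto (fun x => sinc (x / 2) ^ 2 / 2) (𝓝 0) (𝓝 (1 / 2)) := by
    have hcont : Continuous fun x => sinc (x / 2) ^ 2 / 2 := by
      have := continuous_sinc
      fun_prop
    simpa using hcont.tendsto 0
  refine (hsinc.mono_left nhdsWithin_le_nhds).congr' ?_
  filter_upwards [self_mem_nhdsWithin] with x hx
  have hx0 : x ≠ 0 := hx
  have hcos : cos x = 1 - 2 * sin (x / 2) ^ 2 := by
    rw [← mul_div_cancel₀ x two_ne_zero, cos_two_mul', cos_sq']
    ring_nf
  rw [sinc_of_ne_zero (by positivity), hcos]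
  field_simp
  ring

theorem abs_one_sub_cos_le (x : ℝ) : |1 - cos x| ≤ 1 / 2 * |x| ^ 2 := by
  rw [abs_of_nonneg (sub_nonneg.2 (cos_le_one x)), sq_abs]
  linarith [one_sub_sq_div_two_le_cos (x := x)]

theorem abs_one_add_two_mul_cos_div_three_le_s14 {x : ℝ} (hx : |x| ≤ π) :
    |(1 + 2 * cos x) / 3| ≤ exp (-(2 / (3 * π ^ 2)) * x ^ 2) := by
  have hcos := cos_le_one_sub_mul_cos_sq hx
  have hratio : x ^ 2 / π ^ 2 ≤ 1 := by
    rw [div_le_one (by positivity), ← sq_abs x]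
    gcongr
  have hratio0 : 0 ≤ x ^ 2 / π ^ 2 := by positivity
  calc |(1 + 2 * cos x) / 3| ≤ 1 - 2 / 3 * (x ^ 2 / π ^ 2) := by
        rw [div_mul_eq_mul_div, mul_div_assoc] at hcos
        rw [abs_le]
        constructor <;> linarith [neg_one_le_cos x]
    _ = -(2 / (3 * π ^ 2)) * x ^ 2 + 1 := by
        field_simp
        ring
    _ ≤ exp (-(2 / (3 * π ^ 2)) * x ^ 2) := add_one_le_exp _

theorem tendsto_sqrt_pow_mul_integral_one_sub_cos_mul_pow :
    Tendsto (fun n : ℕ => √n ^ 3 * ∫ x in -π..π, (1 - cos x) * ((1 + 2 * cos x) / 3) ^ n) atTop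
      (𝓝 (2 * π * (3 * √3 / (8 * √π)))) := by
  have hpi := pi_pos
  have hquad : Tendsto (fun x => ((1 + 2 * cos x) / 3 - 1) / x ^ 2) (𝓝[≠] 0) (𝓝 (-(1 / 3))) := by
    convert tendsto_one_sub_cos_div_sq.const_mul (-(2 / 3)) using 2 <;> ring
  have hlaplace := tendsto_sqrt_pow_mul_setIntegral_mul_pow (s := Set.Ioc (-π) π)
    measurableSet_Ioc (Ioc_mem_nhds (neg_lt_zero.2 hpi) hpi) (by fun_prop) (by fun_prop)
    (by positivity)
    (fun x hx => abs_one_add_two_mul_cos_div_three_le_s14 (abs_le.2 ⟨hx.1.le, hx.2⟩))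
    (fun x _ => abs_one_sub_cos_le x) hquad tendsto_one_sub_cos_div_sq
  have hgauss : ∫ t : ℝ, 1 / 2 * t ^ 2 * exp (-(1 / 3) * t ^ 2) = 2 * π * (3 * √3 / (8 * √π)) := by
    simp_rw [mul_assoc (1 / 2 : ℝ)]
    rw [MeasureTheory.integral_const_mul, integral_sq_mul_exp_neg_mul_sq (by norm_num),
      div_div_eq_mul_div, div_one, sqrt_mul hpi.le]
    field_simp
    rw [sq_sqrt hpi.le]
    ring
  rw [hgauss] at hlaplace
  simpa only [intervalIntegral.integral_of_le (neg_le_self hpi.le)] using hlaplace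

end CosineEstimates

/-- With T n j the number of sequences in {−1,0,1}^n summing to j,
(T_n(0) − T_n(1)) · n^{3/2} / 3^n → 3√3/(8√π) as n → ∞. -/
theorem stmt_14 (T : ℕ → ℤ → ℕ)
    (hT : ∀ n j, T n j = Set.ncard {a : Fin n → ℤ |
        (∀ i, a i = -1 ∨ a i = 0 ∨ a i = 1) ∧ (∑ i, a i) = j}) :
    Tendsto (fun n : ℕ => ((T n 0 : ℝ) - (T n 1 : ℝ)) * (n : ℝ) ^ ((3 : ℝ) / 2) / 3 ^ n)
      atTop (nhds (3 * Real.sqrt 3 / (8 * Real.sqrt Real.pi))) := by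
  have hcount (n : ℕ) (j : ℤ) : T n j = walkCount {-1, 0, 1} n j := by
    simpa [hT] using ncard_setOf_forall_mem_and_sum_eq {-1, 0, 1} n j
  have hlim := tendsto_sqrt_pow_mul_integral_one_sub_cos_mul_pow.const_mul (2 * π)⁻¹
  rw [inv_mul_cancel_left₀ Real.two_pi_pos.ne'] at hlim
  refine hlim.congr fun n => ?_
  have hsqrt : (n : ℝ) ^ ((3 : ℝ) / 2) = √n ^ 3 := by
    rw [Real.rpow_div_two_eq_sqrt _ n.cast_nonneg]
    norm_cast
  simp_rw [div_pow, mul_div_assoc']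
  rw [intervalIntegral.integral_div, hsqrt, hcount, hcount, walkCount_zero_sub_walkCount_one]
  ring
end

section
/- Fix an integer s ≥ 1 and natural numbers n and j. The number of sequences (x₀, x₁, …, x_n) of natural numbers with x₀ = 0, x_n = j, and for every 0 ≤ i < n both |x_{i+1} − x_i| ≤ s and x_i + x_{i+1} ≥ s, equals A_n(j) − A_n(j+1), where A_n(m) is the number of sequences (a₁, …, a_n) with each a_i an integer satisfying −s ≤ a_i ≤ s and a₁ + ⋯ + a_n = m. -/
/-!
Condition both counts on one extreme step. The count of unconstrained sequences satisfies
`A (n + 1) m = ∑ d ∈ [-s, s], A n (m - d)`, a sum over the full window `[m - s, m + s]`, while a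
mirrored walk reaches `j` from exactly the positions in `[|j - s|, j + s]`. Since `A n` is even,
the function `x ↦ A n (x - i) - A n (x + i + 1)` is odd under the reflection `x ↦ -1 - x`, so the
part of the window `[j - s, j + s]` below `|j - s|` contributes nothing to its sum. Hence this
difference obeys the recursion of the mirrored walks from `i`.
-/

open Finset
open scoped Pointwise

theorem ncard_biUnion_finset {ι α : Type*} {t : Finset ι} {s : ι → Set α}
    (hfin : ∀ i ∈ t, (s i).Finite) (hdisj : (t : Set ι).PairwiseDisjoint s) :
    (⋃ i ∈ t, s i).ncard = ∑ i ∈ t, (s i).ncard := by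
  rw [← finsum_mem_coe_finset, ← t.finite_toSet.ncard_biUnion hfin hdisj]
  rfl

section StepSequences

section AddCommMonoid

variable {G : Type*} [AddCommMonoid G] {S : Finset G} {n : ℕ} {m : G}

/-- The sequences of `n` steps taken from `S` whose total displacement is `m`. In a group they
encode the unconstrained walks of length `n` from `p` to `p + m`, for any `p`. -/
def stepSeqs (S : Finset G) (n : ℕ) (m : G) : Set (Fin n → G) :=
  {a | (∀ i, a i ∈ S) ∧ ∑ i, a i = m}

theorem finite_stepSeqs : (stepSeqs S n m).Finite :=
  (Set.Finite.pi' fun _ => S.finite_toSet).subset fun _ ha => ha.1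

theorem ncard_stepSeqs_zero [DecidableEq G] :
    (stepSeqs S 0 m).ncard = if m = 0 then 1 else 0 := by
  split_ifs with hm <;> simp [stepSeqs, hm, eq_comm]

end AddCommMonoid

section AddCommGroup

variable {G : Type*} [AddCommGroup G] {S : Finset G} {n : ℕ} {m : G}

theorem stepSeqs_succ :
    stepSeqs S (n + 1) m =
      ⋃ d ∈ S, (Fin.cons d · : (Fin n → G) → Fin (n + 1) → G) '' stepSeqs S n (m - d) := by
  ext a
  cases a using Fin.consCases with
  | cons d a =>
    simp only [stepSeqs, Fin.forall_fin_succ, Fin.sum_univ_succ, Set.mem_ofPred_eq, Fin.cons_zero,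
      Fin.cons_succ, eq_sub_iff_add_eq', Set.mem_iUnion, Set.mem_image, Fin.cons_inj,
      exists_eq_right_right, exists_and_left, exists_prop]
    tauto

theorem ncard_stepSeqs_succ :
    (stepSeqs S (n + 1) m).ncard = ∑ d ∈ S, (stepSeqs S n (m - d)).ncard := by
  rw [stepSeqs_succ, ncard_biUnion_finset fun _ _ => finite_stepSeqs.image _]
  · exact sum_congr rfl fun d _ =>
      Set.ncard_image_of_injective _ (Fin.cons_right_injective (α := fun _ => G) d)
  · rintro d - e - hde
    refine Set.disjoint_left.mpr ?_
    rintro _ ⟨a, -, rfl⟩ ⟨b, -, hab⟩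
    exact hde (Fin.cons_injective2 hab).1.symm

theorem ncard_stepSeqs_neg (hS : ∀ d ∈ S, -d ∈ S) :
    (stepSeqs S n (-m)).ncard = (stepSeqs S n m).ncard := by
  have neg_mem_iff (d : G) : -d ∈ S ↔ d ∈ S := ⟨fun hd => neg_neg d ▸ hS _ hd, hS d⟩
  have neg_stepSeqs : -stepSeqs S n m = stepSeqs S n (-m) := by
    ext a
    simp [stepSeqs, neg_mem_iff, neg_eq_iff_eq_neg]
  rw [← neg_stepSeqs, Set.ncard_neg]

end AddCommGroup

end StepSequences

section RelationWalks

variable {α : Type*} {r : α → α → Prop} {pred : α → Finset α} {n : ℕ} {i j : α}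

/-- The walks of length `n` from `i` to `j`, given by their `n + 1` successive positions, each of
whose steps satisfies `r`. -/
def relWalks (r : α → α → Prop) (n : ℕ) (i j : α) : Set (Fin (n + 1) → α) :=
  {x | x 0 = i ∧ x (Fin.last n) = j ∧ ∀ k : Fin n, r (x k.castSucc) (x k.succ)}

theorem ncard_relWalks_zero [DecidableEq α] :
    (relWalks r 0 i j).ncard = if i = j then 1 else 0 := by
  split_ifs with hij
  · have eq_singleton : relWalks r 0 i j = {fun _ => i} := by
      ext x
      simp [relWalks, hij, funext_iff]
    rw [eq_singleton, Set.ncard_singleton]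
  · have eq_empty : relWalks r 0 i j = ∅ :=
      Set.eq_empty_of_forall_notMem fun x hx => hij (hx.1.symm.trans hx.2.1)
    rw [eq_empty, Set.ncard_empty]

theorem relWalks_succ {P : Finset α} (hP : ∀ p, p ∈ P ↔ r p j) :
    relWalks r (n + 1) i j =
      ⋃ p ∈ P, (Fin.snoc · j : (Fin (n + 1) → α) → Fin (n + 2) → α) '' relWalks r n i p := by
  ext x
  cases x using Fin.snocCases with
  | snoc x q =>
    simp only [relWalks, Fin.forall_fin_succ', Fin.succ_castSucc, Fin.succ_last,
      Nat.succ_eq_add_one, Set.mem_ofPred_eq, Fin.snoc_apply_zero, Fin.snoc_last, Fin.snoc_castSucc,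
      hP, Set.mem_iUnion, Set.mem_image, Fin.snoc_inj, existsAndEq, true_and, exists_and_left,
      exists_prop]
    grind

theorem finite_relWalks (hpred : ∀ p q, p ∈ pred q ↔ r p q) : (relWalks r n i j).Finite := by
  induction n generalizing j with
  | zero =>
    refine (Set.finite_singleton fun _ => i).subset fun x hx => funext fun k => ?_
    rw [Fin.fin_one_eq_zero k, hx.1]
  | succ n ih =>
    rw [relWalks_succ (hpred · j)]
    exact (pred j).finite_toSet.biUnion fun _ _ => ih.image _

theorem ncard_relWalks_succ (hpred : ∀ p q, p ∈ pred q ↔ r p q) :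
    (relWalks r (n + 1) i j).ncard = ∑ p ∈ pred j, (relWalks r n i p).ncard := by
  rw [relWalks_succ (hpred · j), ncard_biUnion_finset fun _ _ => (finite_relWalks hpred).image _]
  · exact sum_congr rfl fun p _ =>
      Set.ncard_image_of_injective _ (Fin.snoc_left_injective (α := fun _ => α) j)
  · rintro p - q - hpq
    refine Set.disjoint_left.mpr ?_
    rintro _ ⟨x, hx, rfl⟩ ⟨y, hy, hxy⟩
    obtain rfl : y = x := (Fin.snoc_injective2 hxy).1
    exact hpq (hx.2.1.symm.trans hy.2.1)

end RelationWalks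

section IntervalSums

theorem sum_Icc_natCast {M : Type*} [AddCommMonoid M] (f : ℤ → M) (a b : ℕ) :
    ∑ p ∈ Icc a b, f p = ∑ x ∈ Icc (a : ℤ) b, f x := by
  refine sum_nbij' (fun p => (p : ℤ)) Int.toNat ?_ ?_ ?_ ?_ fun _ _ => rfl
  all_goals
    intro x hx
    simp only [mem_Icc] at hx ⊢
    omega

theorem sum_Icc_const_sub {G M : Type*} [AddCommGroup G] [PartialOrder G] [IsOrderedAddMonoid G]
    [LocallyFiniteOrder G] [AddCommMonoid M] (f : G → M) (a b c : G) :
    ∑ d ∈ Icc b c, f (a - d) = ∑ x ∈ Icc (a - c) (a - b), f x := by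
  refine sum_nbij' (a - ·) (a - ·) ?_ ?_ (fun _ _ => sub_sub_cancel _ _)
    (fun _ _ => sub_sub_cancel _ _) fun _ _ => rfl
  · intro d hd
    rw [mem_Icc] at hd ⊢
    exact ⟨sub_le_sub_left hd.2 a, sub_le_sub_left hd.1 a⟩
  · intro x hx
    rw [mem_Icc] at hx ⊢
    exact ⟨le_sub_comm.mp hx.2, sub_le_comm.mp hx.1⟩

theorem sum_Icc_abs_of_reflect {M : Type*} [AddCommGroup M] {f : ℤ → M}
    (hf : ∀ x, f (-1 - x) = -f x) {c b : ℤ} (hcb : -c ≤ b + 1) :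
    ∑ x ∈ Icc |c| b, f x = ∑ x ∈ Icc c b, f x := by
  have outer_sum_eq_zero : ∑ x ∈ Icc c b \ Icc |c| b, f x = 0 := by
    refine sum_involution (fun x _ => -1 - x) (fun x _ => ?_) (fun x _ _ => ?_) (fun x hx => ?_)
      fun x _ => sub_sub_cancel _ _
    · rw [hf, add_neg_cancel]
    · omega
    · simp only [mem_sdiff, mem_Icc, not_and, abs_eq_max_neg] at hx ⊢
      omega
  rw [← sum_sdiff (Icc_subset_Icc_left (le_abs_self c)), outer_sum_eq_zero, zero_add]

end IntervalSums

section MirrorWalks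

/-- The steps of the walk on `ℕ` with step size at most `s` and a mirror at the origin. The first
two conditions say `|q - p| ≤ s`, without truncated subtraction. -/
def MirrorStep (s p q : ℕ) : Prop :=
  q ≤ p + s ∧ p ≤ q + s ∧ s ≤ p + q

theorem mem_Icc_iff_mirrorStep (s p q : ℕ) :
    p ∈ Icc (q - s : ℤ).natAbs (q + s) ↔ MirrorStep s p q := by
  rw [mem_Icc, MirrorStep]
  omega

theorem sum_mirrorStep_of_reflect {M : Type*} [AddCommGroup M] {f : ℤ → M}
    (hf : ∀ x, f (-1 - x) = -f x) (s j : ℕ) :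
    ∑ p ∈ Icc (j - s : ℤ).natAbs (j + s), f p = ∑ d ∈ Icc (-s : ℤ) s, f (j - d) := by
  rw [sum_Icc_natCast, Int.natCast_natAbs, Nat.cast_add, sum_Icc_abs_of_reflect hf (by omega),
    sum_Icc_const_sub, sub_neg_eq_add]

theorem stmt_17_general (s n i j : ℕ) :
    ((relWalks (MirrorStep s) n i j).ncard : ℤ) =
      (stepSeqs (Icc (-s : ℤ) s) n (j - i)).ncard -
        (stepSeqs (Icc (-s : ℤ) s) n (j + i + 1)).ncard := by
  induction n generalizing j with
  | zero =>
    rw [ncard_relWalks_zero, ncard_stepSeqs_zero, ncard_stepSeqs_zero]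
    split_ifs <;> omega
  | succ n ih =>
    let A (m : ℤ) : ℤ := (stepSeqs (Icc (-s : ℤ) s) n m).ncard
    have A_neg (m : ℤ) : A (-m) = A m :=
      congrArg Nat.cast (ncard_stepSeqs_neg fun d hd => by rw [mem_Icc] at hd ⊢; omega)
    have reflect (x : ℤ) : A (-1 - x - i) - A (-1 - x + i + 1) = -(A (x - i) - A (x + i + 1)) := by
      rw [← A_neg (x - i), ← A_neg (x + i + 1)]
      ring_nf
    calc ((relWalks (MirrorStep s) (n + 1) i j).ncard : ℤ)
        = ∑ p ∈ Icc (j - s : ℤ).natAbs (j + s), (A (p - i) - A (p + i + 1)) := by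
          rw [ncard_relWalks_succ (mem_Icc_iff_mirrorStep s), Nat.cast_sum]
          exact sum_congr rfl fun p _ => ih p
      _ = ∑ d ∈ Icc (-s : ℤ) s, (A (j - d - i) - A (j - d + i + 1)) :=
          sum_mirrorStep_of_reflect (f := fun x => A (x - i) - A (x + i + 1)) reflect s j
      _ = ∑ d ∈ Icc (-s : ℤ) s, A (j - i - d) - ∑ d ∈ Icc (-s : ℤ) s, A (j + i + 1 - d) := by
          rw [← sum_sub_distrib]
          exact sum_congr rfl fun d _ => by ring_nf
      _ = _ := by
          rw [ncard_stepSeqs_succ, ncard_stepSeqs_succ, Nat.cast_sum, Nat.cast_sum]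

end MirrorWalks

/-- The number of n-step walks on ℕ from 0 to j, where a step from p to q requires
|q − p| ≤ s and p + q ≥ s (mirror at the origin), equals A_n(j) − A_n(j+1), where
A_n(m) counts sequences in {−s,…,s}^n summing to m. -/
theorem stmt_17 (s : ℕ) (hs : 1 ≤ s) (n j : ℕ) (A : ℕ → ℤ → ℕ)
    (hA : ∀ N m, A N m = Set.ncard {a : Fin N → ℤ |
        (∀ i, -(s : ℤ) ≤ a i ∧ a i ≤ (s : ℤ)) ∧ (∑ i, a i) = m}) :
    (Set.ncard {x : Fin (n + 1) → ℕ |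
        x 0 = 0 ∧ x (Fin.last n) = j ∧
        ∀ i : Fin n,
          x i.succ ≤ x i.castSucc + s ∧
          x i.castSucc ≤ x i.succ + s ∧
          s ≤ x i.castSucc + x i.succ} : ℤ) =
      (A n j : ℤ) - (A n (j + 1) : ℤ) := by
  simpa [hA, relWalks, MirrorStep, stepSeqs] using stmt_17_general s n 0 j
end

section
/- Fix a natural number j. Then (C(2m, m+j) − C(2m, m+j+1)) · √π · m^{3/2} / 4^m converges to 2j+1 as m → ∞, where C(a,b) denotes the binomial coefficient. -/
open Filter

/-!
The successive ratios of binomial coefficients give the exact identity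
`C(2m, m + j) - C(2m, m + j + 1) = (2j + 1) / (m + j + 1) * C(2m, m + j)`.
For fixed `j` those ratios tend to `1` along the rows `2m`, so `C(2m, m + j)` is equivalent to the
central binomial coefficient, which by the Stirling formula is equivalent to `4 ^ m / √(π m)`.
-/

open Asymptotics Nat
open scoped Real

section CastChoose

variable {K : Type*} [Field K] [CharZero K]

lemma cast_choose_succ_right (n k : ℕ) :
    (n.choose (k + 1) : K) = n.choose k * ((n - k) / (k + 1)) := by
  rw [← mul_div_assoc, eq_div_iff (cast_add_one_ne_zero k)]
  rcases le_or_gt k n with hkn | hnk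
  · rw [← cast_sub hkn]
    exact_mod_cast choose_succ_right_eq n k
  · simp [choose_eq_zero_of_lt hnk, choose_eq_zero_of_lt (hnk.trans k.lt_succ_self)]

lemma cast_choose_sub_cast_choose_succ (n k : ℕ) :
    (n.choose k - n.choose (k + 1) : K) = (2 * k + 1 - n) * (n.choose k / (k + 1)) := by
  have : (k + 1 : K) ≠ 0 := cast_add_one_ne_zero k
  rw [cast_choose_succ_right]
  field_simp
  ring

lemma cast_centralBinom (m : ℕ) : (m.centralBinom : K) = (2 * m)! / m ! ^ 2 := by
  rw [centralBinom_eq_two_mul_choose, two_mul, cast_add_choose, sq]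

end CastChoose

lemma natCast_add_const_isEquivalent (c : ℝ) :
    (fun m : ℕ ↦ (m + c : ℝ)) ~[atTop] fun m ↦ (m : ℝ) :=
  IsEquivalent.refl.add_const_of_norm_tendsto_atTop
    (tendsto_norm_atTop_atTop.comp tendsto_natCast_atTop_atTop)

lemma stirling_two_mul_div_stirling_sq {m : ℕ} (hm : m ≠ 0) :
    √(2 * ↑(2 * m) * π) * (↑(2 * m) / rexp 1) ^ (2 * m) / (√(2 * m * π) * (m / rexp 1) ^ m) ^ 2 =
      4 ^ m / (√π * √m) := by
  have sqrt_two_mul : √(2 * ↑(2 * m) * π) = 2 * (√π * √m) := by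
    rw [show 2 * ↑(2 * m) * π = 2 ^ 2 * (π * m) by push_cast; ring,
      Real.sqrt_mul (by positivity), Real.sqrt_sq two_pos.le, Real.sqrt_mul Real.pi_nonneg]
  have pow_two_mul : (↑(2 * m) / rexp 1) ^ (2 * m) = 4 ^ m * ((m / rexp 1) ^ m) ^ 2 := by
    rw [cast_mul, mul_div_assoc, mul_pow, pow_mul, pow_mul' _ 2 m]
    norm_num
  have sqrt_two_mul_sq : √(2 * m * π) ^ 2 = 2 * (√π * √m) ^ 2 := by
    rw [mul_pow, Real.sq_sqrt (by positivity), Real.sq_sqrt Real.pi_nonneg,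
      Real.sq_sqrt m.cast_nonneg]
    ring
  rw [sqrt_two_mul, pow_two_mul, mul_pow, sqrt_two_mul_sq]
  field_simp

lemma centralBinom_isEquivalent :
    (fun m : ℕ ↦ (m.centralBinom : ℝ)) ~[atTop] fun m ↦ 4 ^ m / (√π * √m) := by
  have stirling := Stirling.factorial_isEquivalent_stirling
  have stirling_two_mul := stirling.comp_tendsto (tendsto_id.const_mul_atTop' two_pos)
  refine ((stirling_two_mul.div (stirling.pow 2)).congr_left ?_).congr_right ?_
  · exact .of_forall fun m ↦ (cast_centralBinom m).symm
  · filter_upwards [eventually_ne_atTop 0] with m hm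
    exact stirling_two_mul_div_stirling_sq hm

lemma choose_two_mul_add_isEquivalent_centralBinom (j : ℕ) :
    (fun m : ℕ ↦ ((2 * m).choose (m + j) : ℝ)) ~[atTop] fun m ↦ (m.centralBinom : ℝ) := by
  induction j with
  | zero => exact .refl
  | succ j ih =>
    have ratio := (natCast_add_const_isEquivalent (-j)).div (natCast_add_const_isEquivalent (j + 1))
    refine ((ih.mul ratio).congr_left (.of_forall fun m ↦ ?_)).congr_right ?_
    · simp only [Pi.mul_apply, Pi.div_apply, ← add_assoc, cast_choose_succ_right]
      push_cast
      ring
    · filter_upwards [eventually_ne_atTop 0] with m hm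
      simp [hm]

lemma choose_two_mul_sub_choose_succ_isEquivalent (j : ℕ) :
    (fun m : ℕ ↦ ((2 * m).choose (m + j) - (2 * m).choose (m + j + 1) : ℝ)) ~[atTop]
      fun m ↦ (2 * j + 1) * (4 ^ m / (√π * (m : ℝ) ^ (3 / 2 : ℝ))) := by
  have choose_div : (fun m : ℕ ↦ ((2 * m).choose (m + j) / (m + (j + 1)) : ℝ)) ~[atTop]
      fun m ↦ 4 ^ m / (√π * √m) / m :=
    ((choose_two_mul_add_isEquivalent_centralBinom j).trans centralBinom_isEquivalent).div
      (natCast_add_const_isEquivalent (j + 1))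
  have prefactor : (fun _ : ℕ ↦ (2 * j + 1 : ℝ)) ~[atTop] fun _ ↦ 2 * j + 1 := .refl
  refine ((prefactor.mul choose_div).congr_left ?_).congr_right ?_
  · refine .of_forall fun m ↦ ?_
    simp only [Pi.mul_apply, cast_choose_sub_cast_choose_succ]
    push_cast
    ring
  · refine .of_forall fun m ↦ ?_
    have rpow_three_halves : (m : ℝ) ^ (3 / 2 : ℝ) = √m * m := by
      rw [Real.rpow_div_two_eq_sqrt 3 m.cast_nonneg, Real.rpow_ofNat, pow_succ _ 2,
        Real.sq_sqrt m.cast_nonneg, mul_comm]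
    simp only [Pi.mul_apply, rpow_three_halves, div_div, mul_assoc]

/-- For fixed j, (C(2m, m+j) − C(2m, m+j+1)) · √π · m^{3/2} / 4^m → 2j+1 as m → ∞. -/
theorem stmt_18 (j : ℕ) :
    Tendsto (fun m : ℕ =>
        ((Nat.choose (2 * m) (m + j) : ℝ) - (Nat.choose (2 * m) (m + j + 1) : ℝ)) *
          Real.sqrt Real.pi * (m : ℝ) ^ ((3 : ℝ) / 2) / 4 ^ m)
      atTop (nhds (2 * (j : ℝ) + 1)) := by
  have scale : (fun m : ℕ ↦ √π * (m : ℝ) ^ (3 / 2 : ℝ) / 4 ^ m) ~[atTop] _ := .refl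
  refine IsEquivalent.tendsto_const <|
    (((choose_two_mul_sub_choose_succ_isEquivalent j).mul scale).congr_left ?_).congr_right ?_
  · exact .of_forall fun m ↦ by simp only [Pi.mul_apply, mul_div_assoc, mul_assoc]
  · filter_upwards [eventually_gt_atTop 0] with m hm
    have : (m : ℝ) ^ (3 / 2 : ℝ) ≠ 0 := by positivity
    simp only [Pi.mul_apply, Function.const_apply]
    field_simp
end
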